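/- Let F₁, F₂ : ℂ⁺ → ℂ⁺ be analytic functions, neither of which is a conformal automorphism of ℂ⁺, satisfying lim_{y→+∞} F_j(iy)/(iy) = 1 for j = 1,2. Then: (i) for every z with Im z ≥ 0 and every w ∈ ℂ⁺ one has F₁(w) − w + z ∈ ℂ⁺ and f(z,w) := F₂(F₁(w) − w + z) − (F₁(w) − w) ∈ ℂ⁺, so that f : (ℂ⁺ ∪ ℝ) × ℂ⁺ → ℂ⁺ is well defined; (ii) there exists a unique analytic self-map ω of ℂ⁺ such that f(z, ω(z)) = ω(z) for all z ∈ ℂ⁺; (iii) this ω satisfies lim_{y→+∞} ω(iy)/(iy) = 1. -/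

import Mathlib

open Complex Filter Set Topology

/-- The open upper half-plane `ℂ⁺ = {z : ℂ | Im z > 0}`. -/
def UHP : Set ℂ := {z : ℂ | 0 < z.im}

/-!
Put `hⱼ w = Fⱼ w - w`, so that the equation `f(z, w) = w` reads `w = z + h₂ (z + h₁ w)`. Letting
`v → i∞` in the Schwarz–Pick inequality for `Fⱼ` shows that `Im hⱼ ≥ 0`, with equality only for
translations.

A map `h` with `Im h ≥ 0` does not increase the chordal form `|a - b| / √(Im a · Im b)` of the
hyperbolic distance, and by Cauchy–Schwarz neither does `(z, w) ↦ z + h w`, which moreover strictly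
decreases every chord of two values of `w` longer than that of the two values of `z`. With one `z`
this gives uniqueness, and a fixed point in every invariant compact set: a point which minimises the
chord to its image. With two values `z, z'`, a fixed point for `z'` is the centre of an invariant
hyperbolic disc for `z`, so that it suffices to solve the equation for one `z`. For `z = iy` with
`y` large, Harnack's inequality makes the Euclidean disc of radius `2 |h₂ z| = o(y)` about `z`
invariant, which also gives the behaviour of `ω` at `i∞`. Analyticity of `ω` comes from the implicit
function theorem, as `w ↦ z + h₂ (z + h₁ w)` has derivative of modulus `< 1` at its fixed point.
-/

open Asymptotics ComplexConjugate Function Metric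

lemma isOpen_UHP : IsOpen UHP := isOpen_lt continuous_const continuous_im

lemma I_mul_mem_UHP {y : ℝ} (hy : 0 < y) : I * y ∈ UHP := by simpa [UHP]

lemma bijOn_add_const_UHP {c : ℂ} (hc : c.im = 0) : BijOn (· + c) UHP UHP := by
  refine ⟨fun w hw => ?_, (add_left_injective c).injOn, fun w hw => ⟨w - c, ?_, sub_add_cancel w c⟩⟩
  all_goals simpa [UHP, hc] using hw

lemma sub_conj_ne_zero {a w : ℂ} (ha : a ∈ UHP) (hw : w ∈ UHP) : w - conj a ≠ 0 := by
  intro h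
  have him : w.im + a.im = 0 := by simpa using congrArg im h
  exact (add_pos hw ha).ne' him

lemma sq_norm_sub_conj (a w : ℂ) : ‖w - conj a‖ ^ 2 = ‖w - a‖ ^ 2 + 4 * (w.im * a.im) := by
  simp only [← normSq_eq_norm_sq, normSq_apply, sub_re, sub_im, conj_re, conj_im]
  ring

/-- The Cayley transform of the upper half-plane onto the unit disc which sends `a` to `0`. -/
noncomputable def cayley (a w : ℂ) : ℂ := (w - a) / (w - conj a)

/-- The inverse of `cayley a`, from the unit disc to the upper half-plane. -/
noncomputable def cayleyInv (a ζ : ℂ) : ℂ := (a - conj a * ζ) / (1 - ζ)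

@[simp] lemma cayley_self (a : ℂ) : cayley a a = 0 := by simp [cayley]

@[simp] lemma cayleyInv_zero (a : ℂ) : cayleyInv a 0 = a := by simp [cayleyInv]

lemma norm_cayley_lt_one {a w : ℂ} (ha : a ∈ UHP) (hw : w ∈ UHP) : ‖cayley a w‖ < 1 := by
  rw [cayley, norm_div, div_lt_one (norm_pos_iff.2 (sub_conj_ne_zero ha hw))]
  refine lt_of_pow_lt_pow_left₀ 2 (norm_nonneg _) ?_
  have him : 0 < w.im * a.im := mul_pos hw ha
  rw [sq_norm_sub_conj]
  linarith

lemma one_sub_ne_zero_of_mem_ball {ζ : ℂ} (hζ : ζ ∈ ball (0 : ℂ) 1) : 1 - ζ ≠ 0 := by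
  intro h
  simp [← sub_eq_zero.1 h] at hζ

lemma cayleyInv_im (a ζ : ℂ) :
    (cayleyInv a ζ).im = a.im * (1 - ‖ζ‖ ^ 2) / ‖1 - ζ‖ ^ 2 := by
  rw [cayleyInv, div_im, ← sub_div, normSq_eq_norm_sq]
  congr 1
  rw [← normSq_eq_norm_sq, normSq_apply]
  simp only [sub_re, sub_im, mul_re, mul_im, conj_re, conj_im, one_re, one_im]
  ring

lemma mapsTo_cayleyInv {a : ℂ} (ha : a ∈ UHP) : MapsTo (cayleyInv a) (ball 0 1) UHP := by
  intro ζ hζ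
  have hden : 0 < ‖1 - ζ‖ := norm_pos_iff.2 (one_sub_ne_zero_of_mem_ball hζ)
  have hnum : 0 < 1 - ‖ζ‖ ^ 2 :=
    sub_pos.2 (pow_lt_one₀ (norm_nonneg ζ) (mem_ball_zero_iff.1 hζ) two_ne_zero)
  have him : 0 < a.im := ha
  change 0 < (cayleyInv a ζ).im
  rw [cayleyInv_im]
  positivity

lemma cayleyInv_cayley {a w : ℂ} (ha : a ∈ UHP) (hw : w ∈ UHP) :
    cayleyInv a (cayley a w) = w := by
  have haa := sub_conj_ne_zero ha ha
  have hwa := sub_conj_ne_zero ha hw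
  have hden : 1 - cayley a w = (a - conj a) / (w - conj a) := by
    rw [cayley, one_sub_div hwa, sub_sub_sub_cancel_left]
  have hnum : a - conj a * cayley a w = w * (a - conj a) / (w - conj a) := by
    rw [cayley]
    field_simp
    ring
  rw [cayleyInv, hden, hnum]
  field_simp

lemma differentiableOn_cayley {a : ℂ} (ha : a ∈ UHP) : DifferentiableOn ℂ (cayley a) UHP :=
  (differentiableOn_id.sub_const a).div (differentiableOn_id.sub_const (conj a))
    fun _ hw => sub_conj_ne_zero ha hw

lemma differentiableOn_cayleyInv (a : ℂ) : DifferentiableOn ℂ (cayleyInv a) (ball 0 1) :=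
  ((differentiableOn_id.const_mul (conj a)).const_sub a).div (differentiableOn_id.const_sub 1)
    fun _ hζ => one_sub_ne_zero_of_mem_ball hζ

lemma norm_cayley_map_le {g : ℂ → ℂ} (hd : DifferentiableOn ℂ g UHP) (hm : MapsTo g UHP UHP)
    {a b : ℂ} (ha : a ∈ UHP) (hb : b ∈ UHP) : ‖cayley (g a) (g b)‖ ≤ ‖cayley a b‖ := by
  have hga : MapsTo (g ∘ cayleyInv a) (ball 0 1) UHP := hm.comp (mapsTo_cayleyInv ha)
  have hφd : DifferentiableOn ℂ (cayley (g a) ∘ g ∘ cayleyInv a) (ball 0 1) :=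
    (differentiableOn_cayley (hm ha)).comp
      (hd.comp (differentiableOn_cayleyInv a) (mapsTo_cayleyInv ha)) hga
  have hφm : MapsTo (cayley (g a) ∘ g ∘ cayleyInv a) (ball 0 1) (closedBall 0 1) :=
    fun ζ hζ => mem_closedBall_zero_iff.2 (norm_cayley_lt_one (hm ha) (hga hζ)).le
  simpa [cayleyInv_cayley ha hb] using
    norm_le_norm_of_mapsTo_ball hφd hφm (by simp) (norm_cayley_lt_one ha hb)

lemma sq_norm_map_sub_mul_le {g : ℂ → ℂ} (hd : DifferentiableOn ℂ g UHP)
    (hm : MapsTo g UHP UHP) {a b : ℂ} (ha : a ∈ UHP) (hb : b ∈ UHP) :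
    ‖g a - g b‖ ^ 2 * (a.im * b.im) ≤ ‖a - b‖ ^ 2 * ((g a).im * (g b).im) := by
  have hcayley := norm_cayley_map_le hd hm ha hb
  rw [cayley, cayley, norm_div, norm_div,
    div_le_div_iff₀ (norm_pos_iff.2 (sub_conj_ne_zero (hm ha) (hm hb)))
      (norm_pos_iff.2 (sub_conj_ne_zero ha hb))] at hcayley
  have hsq := pow_le_pow_left₀ (by positivity) hcayley 2
  rw [mul_pow, mul_pow, sq_norm_sub_conj, sq_norm_sub_conj] at hsq
  rw [norm_sub_rev (g a), norm_sub_rev a]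
  linarith

/-- Pick (or Nevanlinna) functions: analytic maps from the upper half-plane to the closed upper
half-plane. Real constants are allowed, so the values need not lie in `UHP`. -/
structure IsPickFunction (h : ℂ → ℂ) : Prop where
  differentiableOn : DifferentiableOn ℂ h UHP
  im_nonneg : ∀ w ∈ UHP, 0 ≤ (h w).im

lemma IsPickFunction.of_mapsTo {h : ℂ → ℂ} (hd : DifferentiableOn ℂ h UHP)
    (hm : MapsTo h UHP UHP) : IsPickFunction h :=
  ⟨hd, fun _ hw => (hm hw).le⟩

/-- For the hyperbolic distance `d` of the upper half-plane this is `2 sinh (d(a, b) / 2)`. It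
replaces `d` because adding a Pick function is easily seen not to increase it, see
`IsPickFunction.hypChord_add_lt`. -/
noncomputable def hypChord (a b : ℂ) : ℝ := ‖a - b‖ / √(a.im * b.im)

lemma hypChord_nonneg (a b : ℂ) : 0 ≤ hypChord a b := by
  unfold hypChord
  positivity

@[simp] lemma hypChord_self (a : ℂ) : hypChord a a = 0 := by simp [hypChord]

lemma hypChord_mul_sqrt {a b : ℂ} (ha : a ∈ UHP) (hb : b ∈ UHP) :
    hypChord a b * √(a.im * b.im) = ‖a - b‖ :=
  div_mul_cancel₀ _ (Real.sqrt_pos.2 (mul_pos ha hb)).ne'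

lemma hypChord_pos {a b : ℂ} (ha : a ∈ UHP) (hb : b ∈ UHP) (hab : a ≠ b) : 0 < hypChord a b :=
  div_pos (norm_pos_iff.2 (sub_ne_zero.2 hab)) (Real.sqrt_pos.2 (mul_pos ha hb))

lemma continuousOn_hypChord : ContinuousOn (uncurry hypChord) (UHP ×ˢ UHP) :=
  ContinuousOn.div (by fun_prop) (by fun_prop)
    fun _ hp => (Real.sqrt_pos.2 (mul_pos hp.1 hp.2)).ne'

lemma isCompact_setOf_hypChord_le {a : ℂ} (ha : a ∈ UHP) (R : ℝ) :
    IsCompact {w ∈ UHP | hypChord w a ≤ R} := by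
  have hball : {w ∈ UHP | hypChord w a ≤ R} =
      UpperHalfPlane.coe '' closedBall (⟨a, ha⟩ : UpperHalfPlane) (2 * Real.arsinh (R / 2)) := by
    ext w
    simp only [mem_ofPred_eq, mem_image, mem_closedBall, UpperHalfPlane.dist_le_iff_le_sinh,
      mul_div_cancel_left₀ _ (two_ne_zero' ℝ), Real.sinh_arsinh, hypChord, dist_eq_norm]
    constructor
    · rintro ⟨hw, hwa⟩
      refine ⟨⟨w, hw⟩, ?_, rfl⟩
      rw [mul_comm, ← div_div]
      exact div_le_div_of_nonneg_right hwa zero_le_two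
    · rintro ⟨v, hv, rfl⟩
      rw [mul_comm, ← div_div, div_le_div_iff_of_pos_right two_pos] at hv
      exact ⟨v.im_pos, hv⟩
  rw [hball]
  exact (isCompact_closedBall _ _).image UpperHalfPlane.continuous_coe

lemma sqrt_mul_add_sqrt_mul_le {a b p q : ℝ} (ha : 0 ≤ a) (hb : 0 ≤ b) (hp : 0 ≤ p)
    (hq : 0 ≤ q) : √(a * b) + √(p * q) ≤ √((a + p) * (b + q)) := by
  simpa [Real.sqrt_mul, ha, hp, add_nonneg] using
    Real.sum_sqrt_mul_sqrt_le Finset.univ (f := ![a, p]) (g := ![b, q])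
      (by simp [Fin.forall_fin_two, ha, hp]) (by simp [Fin.forall_fin_two, hb, hq])

namespace IsPickFunction

variable {h : ℂ → ℂ}

lemma add_mem_UHP (hh : IsPickFunction h) {z w : ℂ} (hz : z ∈ UHP) (hw : w ∈ UHP) :
    z + h w ∈ UHP :=
  add_pos_of_pos_of_nonneg hz (hh.im_nonneg w hw)

lemma sq_norm_sub_mul_le (hh : IsPickFunction h) {a b : ℂ} (ha : a ∈ UHP) (hb : b ∈ UHP) :
    ‖h a - h b‖ ^ 2 * (a.im * b.im) ≤ ‖a - b‖ ^ 2 * ((h a).im * (h b).im) := by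
  have hpert : ∀ ε > 0, ‖h a - h b‖ ^ 2 * (a.im * b.im) ≤
      ‖a - b‖ ^ 2 * (((h a).im + ε) * ((h b).im + ε)) := by
    intro ε hε
    have hm : MapsTo (fun w => h w + ε * I) UHP UHP := fun w hw => by
      simpa [UHP] using add_pos_of_nonneg_of_pos (hh.im_nonneg w hw) hε
    simpa using sq_norm_map_sub_mul_le (hh.differentiableOn.add_const _) hm ha hb
  have hlim : Tendsto (fun ε : ℝ => ‖a - b‖ ^ 2 * (((h a).im + ε) * ((h b).im + ε))) (𝓝[>] 0)
      (𝓝 (‖a - b‖ ^ 2 * ((h a).im * (h b).im))) :=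
    tendsto_nhdsWithin_of_tendsto_nhds (Continuous.tendsto' (by fun_prop) _ _ (by simp))
  exact ge_of_tendsto hlim (eventually_nhdsWithin_of_forall hpert)

lemma norm_sub_le (hh : IsPickFunction h) {a b : ℂ} (ha : a ∈ UHP) (hb : b ∈ UHP) :
    ‖h a - h b‖ ≤ hypChord a b * √((h a).im * (h b).im) := by
  have hab : 0 < a.im * b.im := mul_pos ha hb
  have hnn : 0 ≤ (h a).im * (h b).im := mul_nonneg (hh.im_nonneg a ha) (hh.im_nonneg b hb)
  refine le_of_sq_le_sq ?_ (mul_nonneg (hypChord_nonneg a b) (Real.sqrt_nonneg _))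
  rw [mul_pow, hypChord, div_pow, Real.sq_sqrt hab.le, Real.sq_sqrt hnn, div_mul_eq_mul_div,
    le_div_iff₀ hab]
  exact hh.sq_norm_sub_mul_le ha hb

lemma eqOn_const_of_im_eq_zero (hh : IsPickFunction h) {a : ℂ} (ha : a ∈ UHP)
    (him : (h a).im = 0) : EqOn h (const ℂ (h a)) UHP := by
  intro b hb
  have hle := hh.norm_sub_le hb ha
  rw [him, mul_zero, Real.sqrt_zero, mul_zero] at hle
  exact sub_eq_zero.1 (norm_le_zero_iff.1 hle)

lemma hypChord_add_lt (hh : IsPickFunction h) {z z' u u' : ℂ} (hz : z ∈ UHP) (hz' : z' ∈ UHP)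
    (hu : u ∈ UHP) (hu' : u' ∈ UHP) {M : ℝ} (hzM : hypChord z z' < M)
    (huM : hypChord u u' ≤ M) : hypChord (z + h u) (z' + h u') < M := by
  have hM : 0 ≤ M := (hypChord_nonneg z z').trans hzM.le
  have hzz' : 0 < z.im * z'.im := mul_pos hz hz'
  rw [hypChord, div_lt_iff₀
    (Real.sqrt_pos.2 (mul_pos (hh.add_mem_UHP hz hu) (hh.add_mem_UHP hz' hu')))]
  calc ‖z + h u - (z' + h u')‖ ≤ ‖z - z'‖ + ‖h u - h u'‖ := by
        rw [add_sub_add_comm]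
        exact norm_add_le _ _
    _ ≤ hypChord z z' * √(z.im * z'.im) + hypChord u u' * √((h u).im * (h u').im) :=
        add_le_add (hypChord_mul_sqrt hz hz').ge (hh.norm_sub_le hu hu')
    _ < M * √(z.im * z'.im) + M * √((h u).im * (h u').im) :=
        add_lt_add_of_lt_of_le (by gcongr) (by gcongr)
    _ = M * (√(z.im * z'.im) + √((h u).im * (h u').im)) := (mul_add _ _ _).symm
    _ ≤ M * √((z + h u).im * (z' + h u').im) := by
        simp only [add_im]
        gcongr
        exact sqrt_mul_add_sqrt_mul_le (le_of_lt hz) (le_of_lt hz') (hh.im_nonneg u hu)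
          (hh.im_nonneg u' hu')

lemma norm_le_two_mul (hh : IsPickFunction h) {a w : ℂ} (ha : a ∈ UHP) (hw : w ∈ UHP)
    (hwa : ‖w - a‖ ≤ a.im / 2) : ‖h w‖ ≤ 2 * ‖h a‖ := by
  have haim : 0 < a.im := ha
  have hwim : a.im / 2 ≤ w.im := by
    have him := (abs_le.1 ((abs_im_le_norm (w - a)).trans hwa)).1
    rw [sub_im] at him
    linarith
  have hsq : ‖h w - h a‖ ^ 2 * (a.im ^ 2 / 2) ≤ ‖h w‖ * ‖h a‖ / 2 * (a.im ^ 2 / 2) := by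
    calc ‖h w - h a‖ ^ 2 * (a.im ^ 2 / 2) = ‖h w - h a‖ ^ 2 * (a.im / 2 * a.im) := by ring
      _ ≤ ‖h w - h a‖ ^ 2 * (w.im * a.im) := by gcongr
      _ ≤ ‖w - a‖ ^ 2 * ((h w).im * (h a).im) := hh.sq_norm_sub_mul_le hw ha
      _ ≤ (a.im / 2) ^ 2 * (‖h w‖ * ‖h a‖) :=
        mul_le_mul (pow_le_pow_left₀ (norm_nonneg _) hwa 2)
          (mul_le_mul (im_le_norm _) (im_le_norm _) (hh.im_nonneg a ha) (norm_nonneg _))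
          (mul_nonneg (hh.im_nonneg w hw) (hh.im_nonneg a ha)) (sq_nonneg _)
      _ = ‖h w‖ * ‖h a‖ / 2 * (a.im ^ 2 / 2) := by ring
  have hdiff : ‖h w - h a‖ ^ 2 ≤ ‖h w‖ * ‖h a‖ / 2 := le_of_mul_le_mul_right hsq (by positivity)
  have htri := norm_sub_norm_le (h w) (h a)
  by_contra! hlt
  nlinarith [norm_nonneg (h a)]

lemma norm_deriv_mul_im_le (hh : IsPickFunction h) {a : ℂ} (ha : a ∈ UHP) :
    ‖deriv h a‖ * a.im ≤ (h a).im := by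
  have hda : DifferentiableAt ℂ h a := hh.differentiableOn.differentiableAt (isOpen_UHP.mem_nhds ha)
  have hslope : Tendsto (fun b => ‖slope h a b‖ ^ 2 * (b.im * a.im)) (𝓝[≠] a)
      (𝓝 (‖deriv h a‖ ^ 2 * (a.im * a.im))) :=
    (hda.hasDerivAt.tendsto_slope.norm.pow 2).mul
      (((continuous_im.tendsto a).mono_left nhdsWithin_le_nhds).mul_const _)
  have him : Tendsto (fun b => (h b).im * (h a).im) (𝓝[≠] a) (𝓝 ((h a).im * (h a).im)) :=
    (((continuous_im.tendsto _).comp hda.continuousAt.tendsto).mono_left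
      nhdsWithin_le_nhds).mul_const _
  have hsq : ‖deriv h a‖ ^ 2 * (a.im * a.im) ≤ (h a).im * (h a).im := by
    refine le_of_tendsto_of_tendsto hslope him ?_
    filter_upwards [self_mem_nhdsWithin, mem_nhdsWithin_of_mem_nhds (isOpen_UHP.mem_nhds ha)]
      with b hba hb
    rw [slope_def_field, norm_div, div_pow, div_mul_eq_mul_div,
      div_le_iff₀ (pow_pos (norm_pos_iff.2 (sub_ne_zero.2 hba)) 2), mul_comm (_ * _)]
    exact hh.sq_norm_sub_mul_le hb ha
  refine le_of_sq_le_sq ?_ (hh.im_nonneg a ha)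
  linarith

lemma hasStrictDerivAt (hh : IsPickFunction h) {a : ℂ} (ha : a ∈ UHP) :
    HasStrictDerivAt h (deriv h a) a :=
  (hh.differentiableOn.analyticAt (isOpen_UHP.mem_nhds ha)).hasStrictDerivAt

lemma im_le_im_of_tendsto {F : ℂ → ℂ} (hF : IsPickFunction F)
    (hl : Tendsto (fun y : ℝ => F (I * y) / (I * y)) atTop (𝓝 1)) {w : ℂ} (hw : w ∈ UHP) :
    w.im ≤ (F w).im := by
  -- Let `v = iy → i∞` in the Schwarz–Pick inequality between `w` and `v`, divided by `y ^ 3`.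
  have hzero (c : ℂ) : Tendsto (fun y : ℝ => c / (I * y)) atTop (𝓝 0) := by
    simpa [Function.comp_def, div_eq_mul_inv, mul_assoc, mul_comm] using
      (tendsto_inv₀_cobounded.comp (RCLike.tendsto_ofReal_atTop_cobounded ℂ)).const_mul (c / I)
  have hleft : Tendsto (fun y : ℝ => ‖F w / (I * y) - F (I * y) / (I * y)‖ ^ 2 * w.im) atTop
      (𝓝 w.im) := by
    simpa using (((hzero (F w)).sub hl).norm.pow 2).mul_const w.im
  have hright : Tendsto (fun y : ℝ => ‖w / (I * y) - 1‖ ^ 2 *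
      ((F w).im * ‖F (I * y) / (I * y)‖)) atTop (𝓝 (F w).im) := by
    simpa using (((hzero w).sub_const 1).norm.pow 2).mul (hl.norm.const_mul (F w).im)
  refine le_of_tendsto_of_tendsto hleft hright ?_
  filter_upwards [eventually_gt_atTop 0] with y hy
  have hv0 : I * (y : ℂ) ≠ 0 := by simp [hy.ne']
  have hnorm : ‖I * (y : ℂ)‖ = y := by simp [hy.le]
  have hvim : (I * (y : ℂ)).im = y := by simp
  have hsp := hF.sq_norm_sub_mul_le hw (I_mul_mem_UHP hy)
  rw [hvim] at hsp
  rw [← sub_div, div_sub_one hv0, norm_div, norm_div, norm_div, hnorm,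
    ← mul_le_mul_iff_of_pos_right (pow_pos hy 3)]
  calc (‖F w - F (I * y)‖ / y) ^ 2 * w.im * y ^ 3
      = ‖F w - F (I * y)‖ ^ 2 * (w.im * y) := by field_simp
    _ ≤ ‖w - I * y‖ ^ 2 * ((F w).im * (F (I * y)).im) := hsp
    _ ≤ ‖w - I * y‖ ^ 2 * ((F w).im * ‖F (I * y)‖) := by
        gcongr
        · exact hF.im_nonneg w hw
        · exact im_le_norm _
    _ = (‖w - I * y‖ / y) ^ 2 * ((F w).im * (‖F (I * y)‖ / y)) * y ^ 3 := by field_simp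

lemma sub_id {F : ℂ → ℂ} (hF : IsPickFunction F)
    (hl : Tendsto (fun y : ℝ => F (I * y) / (I * y)) atTop (𝓝 1)) :
    IsPickFunction fun w => F w - w where
  differentiableOn := hF.differentiableOn.sub differentiableOn_id
  im_nonneg w hw := by
    rw [sub_im]
    exact sub_nonneg.2 (hF.im_le_im_of_tendsto hl hw)

end IsPickFunction

lemma mapsTo_sub_id_of_not_bijOn {F : ℂ → ℂ} (hF : IsPickFunction fun w => F w - w)
    (hna : ¬ BijOn F UHP UHP) : MapsTo (fun w => F w - w) UHP UHP := by
  intro a ha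
  refine (hF.im_nonneg a ha).lt_of_ne fun him => hna ?_
  exact (bijOn_add_const_UHP him.symm).congr fun b hb =>
    (sub_eq_iff_eq_add'.1 (hF.eqOn_const_of_im_eq_zero ha him.symm hb)).symm

lemma isEquivalent_I_mul_iff {g : ℂ → ℂ} :
    ((fun y : ℝ => g (I * y)) ~[atTop] fun y : ℝ => I * (y : ℂ)) ↔
      Tendsto (fun y : ℝ => g (I * y) / (I * y)) atTop (𝓝 1) :=
  isEquivalent_iff_tendsto_one <| (eventually_ne_atTop 0).mono fun y hy => by simp [hy]

lemma eventually_four_mul_norm_le_im {h : ℂ → ℂ}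
    (ho : (fun y : ℝ => h (I * y)) =o[atTop] fun y : ℝ => I * (y : ℂ)) :
    ∀ᶠ y : ℝ in atTop, 4 * ‖h (I * y)‖ ≤ (I * (y : ℂ)).im := by
  filter_upwards [ho.def (show (0 : ℝ) < 1 / 4 by norm_num), eventually_gt_atTop 0] with y hle hy
  simp only [norm_mul, norm_I, norm_real, Real.norm_of_nonneg hy.le, one_mul] at hle
  rw [I_mul_im, ofReal_re]
  linarith

lemma exists_differentiableAt_isFixedPt {𝕜 E : Type*} [NontriviallyNormedField 𝕜]
    [CompleteSpace 𝕜] [NormedAddCommGroup E] [NormedSpace 𝕜 E] [CompleteSpace E]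
    {f : E → 𝕜 → 𝕜} {f' : E × 𝕜 →L[𝕜] 𝕜} {z₀ : E} {w₀ : 𝕜}
    (hf : HasStrictFDerivAt (uncurry f) f' (z₀, w₀)) (hne : f' (0, 1) ≠ 1)
    (hfix : IsFixedPt (f z₀) w₀) :
    ∃ ψ : E → 𝕜, ψ z₀ = w₀ ∧ DifferentiableAt 𝕜 ψ z₀ ∧ ∀ᶠ z in 𝓝 z₀, IsFixedPt (f z) (ψ z) := by
  have hΦ := hf.sub hasStrictFDerivAt_snd
  have hinv : ((f' - .snd 𝕜 E 𝕜) ∘L .inr 𝕜 E 𝕜).IsInvertible := by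
    refine ⟨.unitsEquivAut 𝕜 (Units.mk0 (f' (0, 1) - 1) (sub_ne_zero.2 hne)), ?_⟩
    ext
    simp
  have hψ := hΦ.hasStrictFDerivAt_implicitFunctionOfProdDomain hinv
  refine ⟨hΦ.implicitFunctionOfProdDomain hinv, ?_, hψ.differentiableAt, ?_⟩
  · exact (hΦ.eventually_apply_eq_iff_implicitFunctionOfProdDomain hinv).self_of_nhds.1 rfl
  · filter_upwards [hΦ.eventually_apply_implicitFunctionOfProdDomain hinv] with z hz
    simp only [Pi.sub_apply, uncurry, hfix.eq, sub_self] at hz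
    exact sub_eq_zero.1 hz

/-- The fixed points of `subordMap h₁ h₂ z` are the values at `z` of the subordination function.
For `hⱼ w = Fⱼ w - w` it is `w ↦ F₂ (F₁ w - w + z) - (F₁ w - w)`. -/
def subordMap (h₁ h₂ : ℂ → ℂ) (z w : ℂ) : ℂ := z + h₂ (z + h₁ w)

section SubordMap

variable {h₁ h₂ : ℂ → ℂ} {z z' w w' : ℂ}

lemma subordMap_sub_id (F₁ F₂ : ℂ → ℂ) (z w : ℂ) :
    subordMap (fun u => F₁ u - u) (fun u => F₂ u - u) z w =
      F₂ (F₁ w - w + z) - (F₁ w - w) := by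
  rw [subordMap, add_comm z (F₁ w - w)]
  ring

lemma mapsTo_subordMap (hh₁ : IsPickFunction h₁) (hh₂ : IsPickFunction h₂) (hz : z ∈ UHP) :
    MapsTo (subordMap h₁ h₂ z) UHP UHP :=
  fun _ hw => hh₂.add_mem_UHP hz (hh₁.add_mem_UHP hz hw)

lemma continuousOn_subordMap (hh₁ : IsPickFunction h₁) (hh₂ : IsPickFunction h₂)
    (hz : z ∈ UHP) : ContinuousOn (subordMap h₁ h₂ z) UHP :=
  (hh₂.differentiableOn.continuousOn.comp
    (hh₁.differentiableOn.continuousOn.const_add z) fun _ hw => hh₁.add_mem_UHP hz hw).const_add z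

lemma hypChord_subordMap_lt (hh₁ : IsPickFunction h₁) (hh₂ : IsPickFunction h₂) (hz : z ∈ UHP)
    (hz' : z' ∈ UHP) (hw : w ∈ UHP) (hw' : w' ∈ UHP) {M : ℝ} (hzM : hypChord z z' < M)
    (hwM : hypChord w w' ≤ M) : hypChord (subordMap h₁ h₂ z w) (subordMap h₁ h₂ z' w') < M :=
  hh₂.hypChord_add_lt hz hz' (hh₁.add_mem_UHP hz hw) (hh₁.add_mem_UHP hz' hw') hzM
    (hh₁.hypChord_add_lt hz hz' hw hw' hzM hwM).le

lemma hypChord_subordMap_le (hh₁ : IsPickFunction h₁) (hh₂ : IsPickFunction h₂) (hz : z ∈ UHP)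
    (hz' : z' ∈ UHP) (hw : w ∈ UHP) (hw' : w' ∈ UHP) {M : ℝ} (hzM : hypChord z z' ≤ M)
    (hwM : hypChord w w' ≤ M) : hypChord (subordMap h₁ h₂ z w) (subordMap h₁ h₂ z' w') ≤ M :=
  le_of_forall_gt_imp_ge_of_dense fun _ hM =>
    (hypChord_subordMap_lt hh₁ hh₂ hz hz' hw hw' (hzM.trans_lt hM) (hwM.trans hM.le)).le

lemma eq_of_isFixedPt_subordMap (hh₁ : IsPickFunction h₁) (hh₂ : IsPickFunction h₂)
    (hz : z ∈ UHP) (hw : w ∈ UHP) (hw' : w' ∈ UHP) (hfix : IsFixedPt (subordMap h₁ h₂ z) w)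
    (hfix' : IsFixedPt (subordMap h₁ h₂ z) w') : w = w' := by
  by_contra hne
  have hlt := hypChord_subordMap_lt hh₁ hh₂ hz hz hw hw'
    (by simpa using hypChord_pos hw hw' hne) le_rfl
  rw [hfix.eq, hfix'.eq] at hlt
  exact hlt.false

lemma exists_isFixedPt_subordMap_of_isCompact (hh₁ : IsPickFunction h₁)
    (hh₂ : IsPickFunction h₂) (hz : z ∈ UHP) {K : Set ℂ} (hK : IsCompact K)
    (hne : K.Nonempty) (hKU : K ⊆ UHP) (hmaps : MapsTo (subordMap h₁ h₂ z) K K) :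
    ∃ w ∈ K, IsFixedPt (subordMap h₁ h₂ z) w := by
  have hcont : ContinuousOn (fun w => hypChord w (subordMap h₁ h₂ z w)) K :=
    continuousOn_hypChord.comp
      (continuousOn_id.prodMk ((continuousOn_subordMap hh₁ hh₂ hz).mono hKU))
      fun _ hw => ⟨hKU hw, hKU (hmaps hw)⟩
  obtain ⟨w, hwK, hmin⟩ := hK.exists_isMinOn hne hcont
  refine ⟨w, hwK, ?_⟩
  by_contra hfix
  have hpos := hypChord_pos (hKU hwK) (hKU (hmaps hwK)) (Ne.symm hfix)
  exact (hypChord_subordMap_lt hh₁ hh₂ hz hz (hKU hwK) (hKU (hmaps hwK)) (by simpa using hpos)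
    le_rfl).not_ge (hmin (hmaps hwK))

lemma exists_isFixedPt_subordMap_of_isFixedPt (hh₁ : IsPickFunction h₁)
    (hh₂ : IsPickFunction h₂) (hz : z ∈ UHP) (hz' : z' ∈ UHP) (hw' : w' ∈ UHP)
    (hfix : IsFixedPt (subordMap h₁ h₂ z') w') :
    ∃ w ∈ UHP, IsFixedPt (subordMap h₁ h₂ z) w := by
  set K := {w ∈ UHP | hypChord w w' ≤ hypChord z z'}
  have hmaps : MapsTo (subordMap h₁ h₂ z) K K := fun w hw =>
    ⟨mapsTo_subordMap hh₁ hh₂ hz hw.1, by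
      simpa only [hfix.eq] using hypChord_subordMap_le hh₁ hh₂ hz hz' hw.1 hw' le_rfl hw.2⟩
  obtain ⟨w, hw, hwfix⟩ := exists_isFixedPt_subordMap_of_isCompact hh₁ hh₂ hz
    (isCompact_setOf_hypChord_le hw' _) ⟨w', hw', by simp [hypChord_nonneg]⟩ (fun _ hw => hw.1)
    hmaps
  exact ⟨w, hw.1, hwfix⟩

lemma exists_isFixedPt_subordMap_mem_closedBall (hh₁ : IsPickFunction h₁)
    (hh₂ : IsPickFunction h₂) (hz : z ∈ UHP) (h₁z : 4 * ‖h₁ z‖ ≤ z.im)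
    (h₂z : 4 * ‖h₂ z‖ ≤ z.im) :
    ∃ w ∈ UHP, IsFixedPt (subordMap h₁ h₂ z) w ∧ ‖w - z‖ ≤ 2 * ‖h₂ z‖ := by
  have hzim : 0 < z.im := hz
  have hsub : closedBall z (2 * ‖h₂ z‖) ⊆ UHP := fun w hw => by
    have him := (abs_le.1 ((abs_im_le_norm (w - z)).trans (mem_closedBall_iff_norm.1 hw))).1
    rw [sub_im] at him
    change 0 < w.im
    linarith
  have hmaps : MapsTo (subordMap h₁ h₂ z) (closedBall z (2 * ‖h₂ z‖))
      (closedBall z (2 * ‖h₂ z‖)) := fun w hw => by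
    have h₁w : ‖h₁ w‖ ≤ 2 * ‖h₁ z‖ :=
      hh₁.norm_le_two_mul hz (hsub hw) ((mem_closedBall_iff_norm.1 hw).trans (by linarith))
    rw [mem_closedBall_iff_norm, subordMap, add_sub_cancel_left]
    refine hh₂.norm_le_two_mul hz (hh₁.add_mem_UHP hz (hsub hw)) ?_
    rw [add_sub_cancel_left]
    linarith
  obtain ⟨w, hw, hfix⟩ := exists_isFixedPt_subordMap_of_isCompact hh₁ hh₂ hz
    (isCompact_closedBall _ _) (nonempty_closedBall.2 (by positivity)) hsub hmaps
  exact ⟨w, hsub hw, hfix, mem_closedBall_iff_norm.1 hw⟩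

lemma norm_deriv_mul_deriv_lt_one_of_isFixedPt (hh₁ : IsPickFunction h₁)
    (hh₂ : IsPickFunction h₂) (hz : z ∈ UHP) (hw : w ∈ UHP)
    (hfix : IsFixedPt (subordMap h₁ h₂ z) w) :
    ‖deriv h₂ (z + h₁ w) * deriv h₁ w‖ < 1 := by
  have hu := hh₁.add_mem_UHP hz hw
  have hzim : 0 < z.im := hz
  have hwim : 0 < w.im := hw
  have hw_eq : w.im = z.im + (h₂ (z + h₁ w)).im := by
    simpa [subordMap] using (congrArg im hfix.eq).symm
  have h₁lt : ‖deriv h₁ w‖ * w.im < (z + h₁ w).im := by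
    have hderiv := hh₁.norm_deriv_mul_im_le hw
    rw [add_im]
    linarith
  have h₂lt : ‖deriv h₂ (z + h₁ w)‖ * (z + h₁ w).im < w.im := by
    have hderiv := hh₂.norm_deriv_mul_im_le hu
    linarith
  rw [norm_mul, ← mul_lt_mul_iff_of_pos_right hwim, one_mul, mul_assoc]
  exact (mul_le_mul_of_nonneg_left h₁lt.le (norm_nonneg _)).trans_lt h₂lt

lemma hasStrictFDerivAt_subordMap (hh₁ : IsPickFunction h₁)
    (hh₂ : IsPickFunction h₂) (hz : z ∈ UHP) (hw : w ∈ UHP) :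
    HasStrictFDerivAt (uncurry (subordMap h₁ h₂))
      (.fst ℂ ℂ ℂ + deriv h₂ (z + h₁ w) • (.fst ℂ ℂ ℂ + deriv h₁ w • .snd ℂ ℂ ℂ)) (z, w) := by
  have hz' : HasStrictFDerivAt Prod.fst (.fst ℂ ℂ ℂ) (z, w) := hasStrictFDerivAt_fst
  have hu := hz'.add ((hh₁.hasStrictDerivAt hw).comp_hasStrictFDerivAt (z, w) hasStrictFDerivAt_snd)
  exact hz'.add ((hh₂.hasStrictDerivAt (hh₁.add_mem_UHP hz hw)).comp_hasStrictFDerivAt (z, w) hu)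

lemma differentiableOn_of_isFixedPt_subordMap {ω : ℂ → ℂ} (hh₁ : IsPickFunction h₁)
    (hh₂ : IsPickFunction h₂) (hω : MapsTo ω UHP UHP)
    (hfix : ∀ z ∈ UHP, IsFixedPt (subordMap h₁ h₂ z) (ω z)) : DifferentiableOn ℂ ω UHP := by
  intro z₀ hz₀
  have hne : deriv h₂ (z₀ + h₁ (ω z₀)) * deriv h₁ (ω z₀) ≠ 1 := fun heq => by
    simpa [heq] using
      norm_deriv_mul_deriv_lt_one_of_isFixedPt hh₁ hh₂ hz₀ (hω hz₀) (hfix z₀ hz₀)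
  obtain ⟨ψ, hψz₀, hψd, hψfix⟩ := exists_differentiableAt_isFixedPt
    (hasStrictFDerivAt_subordMap hh₁ hh₂ hz₀ (hω hz₀))
    (by simpa using hne) (hfix z₀ hz₀)
  have hψU : ∀ᶠ z in 𝓝 z₀, ψ z ∈ UHP :=
    hψd.continuousAt.eventually_mem (isOpen_UHP.mem_nhds (hψz₀ ▸ hω hz₀))
  refine (hψd.congr_of_eventuallyEq ?_).differentiableWithinAt
  filter_upwards [hψfix, hψU, isOpen_UHP.mem_nhds hz₀] with z hzfix hψz hz
  exact eq_of_isFixedPt_subordMap hh₁ hh₂ hz (hω hz) hψz (hfix z hz) hzfix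

lemma exists_isFixedPt_subordMap_of_isLittleO (hh₁ : IsPickFunction h₁)
    (hh₂ : IsPickFunction h₂)
    (ho₁ : (fun y : ℝ => h₁ (I * y)) =o[atTop] fun y : ℝ => I * (y : ℂ))
    (ho₂ : (fun y : ℝ => h₂ (I * y)) =o[atTop] fun y : ℝ => I * (y : ℂ)) :
    ∃ ω : ℂ → ℂ, DifferentiableOn ℂ ω UHP ∧ MapsTo ω UHP UHP ∧
      (∀ z ∈ UHP, IsFixedPt (subordMap h₁ h₂ z) (ω z)) ∧
      (fun y : ℝ => ω (I * y)) ~[atTop] fun y : ℝ => I * (y : ℂ) := by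
  have hnear : ∀ᶠ y : ℝ in atTop, I * (y : ℂ) ∈ UHP ∧ ∃ w ∈ UHP,
      IsFixedPt (subordMap h₁ h₂ (I * y)) w ∧ ‖w - I * y‖ ≤ 2 * ‖h₂ (I * y)‖ := by
    filter_upwards [eventually_gt_atTop 0, eventually_four_mul_norm_le_im ho₁,
      eventually_four_mul_norm_le_im ho₂] with y hy hy₁ hy₂
    exact ⟨I_mul_mem_UHP hy,
      exists_isFixedPt_subordMap_mem_closedBall hh₁ hh₂ (I_mul_mem_UHP hy) hy₁ hy₂⟩
  obtain ⟨y₀, hy₀, w₀, hw₀, hfix₀, -⟩ := hnear.exists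
  have hex : ∀ z ∈ UHP, ∃ w ∈ UHP, IsFixedPt (subordMap h₁ h₂ z) w := fun z hz =>
    exists_isFixedPt_subordMap_of_isFixedPt hh₁ hh₂ hz hy₀ hw₀ hfix₀
  choose! ω hω hfix using hex
  refine ⟨ω, differentiableOn_of_isFixedPt_subordMap hh₁ hh₂ hω hfix, hω, hfix, ?_⟩
  refine (IsBigO.of_bound 2 ?_).trans_isLittleO ho₂
  filter_upwards [hnear] with y ⟨hy, w, hw, hwfix, hle⟩
  rwa [eq_of_isFixedPt_subordMap hh₁ hh₂ hy hw (hω _ hy) hwfix (hfix _ hy)] at hle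

end SubordMap

/-- Subordination result: given analytic `F₁, F₂ : ℂ⁺ → ℂ⁺`, neither a conformal
automorphism of `ℂ⁺`, with `F_j(iy)/(iy) → 1` as `y → ∞`, the map
`f(z,w) = F₂(F₁(w) − w + z) − (F₁(w) − w)` is a well-defined map into `ℂ⁺` for
`Im z ≥ 0`, `w ∈ ℂ⁺`, and there is a unique analytic self-map `ω` of `ℂ⁺` with
`f(z, ω(z)) = ω(z)` for all `z ∈ ℂ⁺`; moreover `ω(iy)/(iy) → 1` as `y → ∞`. -/
theorem first_subordination_result
    (F₁ F₂ : ℂ → ℂ)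
    (hd₁ : DifferentiableOn ℂ F₁ UHP) (hm₁ : Set.MapsTo F₁ UHP UHP)
    (hd₂ : DifferentiableOn ℂ F₂ UHP) (hm₂ : Set.MapsTo F₂ UHP UHP)
    (hna₁ : ¬ Set.BijOn F₁ UHP UHP) (hna₂ : ¬ Set.BijOn F₂ UHP UHP)
    (hl₁ : Tendsto (fun y : ℝ => F₁ (Complex.I * y) / (Complex.I * y)) atTop (𝓝 1))
    (hl₂ : Tendsto (fun y : ℝ => F₂ (Complex.I * y) / (Complex.I * y)) atTop (𝓝 1)) :
    (∀ z w : ℂ, 0 ≤ z.im → w ∈ UHP →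
        (F₁ w - w + z) ∈ UHP ∧ (F₂ (F₁ w - w + z) - (F₁ w - w)) ∈ UHP) ∧
    ∃ ω : ℂ → ℂ, DifferentiableOn ℂ ω UHP ∧ Set.MapsTo ω UHP UHP ∧
      (∀ z ∈ UHP, F₂ (F₁ (ω z) - ω z + z) - (F₁ (ω z) - ω z) = ω z) ∧
      Tendsto (fun y : ℝ => ω (Complex.I * y) / (Complex.I * y)) atTop (𝓝 1) ∧
      (∀ ω' : ℂ → ℂ, DifferentiableOn ℂ ω' UHP → Set.MapsTo ω' UHP UHP →
        (∀ z ∈ UHP, F₂ (F₁ (ω' z) - ω' z + z) - (F₁ (ω' z) - ω' z) = ω' z) →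
        Set.EqOn ω ω' UHP) := by
  have hF₁ := (IsPickFunction.of_mapsTo hd₁ hm₁).sub_id hl₁
  have hF₂ := (IsPickFunction.of_mapsTo hd₂ hm₂).sub_id hl₂
  have hpos₁ := mapsTo_sub_id_of_not_bijOn hF₁ hna₁
  have hpos₂ := mapsTo_sub_id_of_not_bijOn hF₂ hna₂
  simp only [← subordMap_sub_id F₁ F₂]
  refine ⟨fun z w hz hw => ?_, ?_⟩
  · have hu : z + (F₁ w - w) ∈ UHP := add_pos_of_nonneg_of_pos hz (hpos₁ hw)
    exact ⟨add_comm z _ ▸ hu, add_pos_of_nonneg_of_pos hz (hpos₂ hu)⟩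
  · obtain ⟨ω, hωd, hω, hfix, hequiv⟩ := exists_isFixedPt_subordMap_of_isLittleO hF₁ hF₂
      (isEquivalent_I_mul_iff.2 hl₁).isLittleO (isEquivalent_I_mul_iff.2 hl₂).isLittleO
    exact ⟨ω, hωd, hω, hfix, isEquivalent_I_mul_iff.1 hequiv, fun ω' _ hω' hfix' z hz =>
      eq_of_isFixedPt_subordMap hF₁ hF₂ hz (hω hz) (hω' hz) (hfix z hz) (hfix' z hz)⟩
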